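/- Fix integers n ≥ 5, m ≥ 1, a real c, symmetric matrices H_1,…,H_m as in the context, and an integer k with 2 ≤ k ≤ ⌊n/2⌋. If Ric − α(n,k,H,c)·I_n is positive definite (i.e., xᵀ·Ric·x > α(n,k,H,c)·|x|² for every nonzero x ∈ ℝⁿ), then Θ_k < k(n−k)c. -/

import Mathlib

open Finset Matrix

noncomputable def cF (n m : ℕ) (A : Fin m → Matrix (Fin n) (Fin n) ℝ) (a : Fin m) : ℝ :=
  (A a).trace / (n : ℝ)

noncomputable def HF (n m : ℕ) (A : Fin m → Matrix (Fin n) (Fin n) ℝ) : ℝ :=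
  Real.sqrt (∑ a : Fin m, cF n m A a ^ 2)

noncomputable def RicF (n m : ℕ) (c : ℝ) (A : Fin m → Matrix (Fin n) (Fin n) ℝ) :
    Matrix (Fin n) (Fin n) ℝ :=
  (((n : ℝ) - 1) * c) • (1 : Matrix (Fin n) (Fin n) ℝ) +
    ∑ a : Fin m, (((n : ℝ) * cF n m A a) • A a - A a * A a)

noncomputable def ThetaF (n m : ℕ) (A : Fin m → Matrix (Fin n) (Fin n) ℝ) (q : ℕ) : ℝ :=
  ∑ i ∈ Finset.univ.filter (fun i : Fin n => (i : ℕ) < q),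
    ∑ j ∈ Finset.univ.filter (fun j : Fin n => q ≤ (j : ℕ)),
      (2 * ∑ a : Fin m, (A a i j) ^ 2 - ∑ a : Fin m, A a i i * A a j j)

noncomputable def alphaF (n k : ℕ) (H c : ℝ) : ℝ :=
  ((n : ℝ) - 1 -
      (k : ℝ) * ((n : ℝ) - (k : ℝ)) * ((n : ℝ) - 2) /
        ((k : ℝ) * ((n : ℝ) - 2 * (k : ℝ)) + (n : ℝ) * ((k : ℝ) - 1) * ((n : ℝ) - (k : ℝ)))) *
    (c + H ^ 2)

/-!
Only the diagonal of `Ric` matters. Split the indices into blocks `S` and `Sᶜ` of sizes `p` and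
`q`. Let `τ` and `σ` be the vectors of partial traces of the `H_α` over the two blocks, and `N`
the sum over `α` of the squared norms of the `S × Sᶜ` blocks. Cauchy–Schwarz on the diagonal entries
gives `∑_{i ∈ S} Ric_ii + N ≤ p (n - 1) c + (1 - 1/p) |τ|² + ⟨τ, σ⟩`, and likewise for `Sᶜ`.
Adding `p (q - 1)` times the first estimate to `q (p - 1)` times the second gives `|τ|²` and `|σ|²`
the same coefficient, so `n² H² = |τ|² + |σ|² + 2 ⟨τ, σ⟩` eliminates both; the constant in the
function `α` is exactly the one for which `H²` then cancels. What is left is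
`(2 p q - n) N - (n - 2) ⟨τ, σ⟩ < (n - 2) p q c`, where `2 p q - n ≥ 2 (n - 2)` as `p, q ≥ 2`, and
`Θ_p = 2 N - ⟨τ, σ⟩`.
-/

section BlockDecomposition

variable {ι R : Type*}

/-- The trace of the diagonal block of a matrix with rows and columns in `S`, as a linear
functional. -/
def blockTrace [CommSemiring R] (S : Finset ι) : Matrix ι ι R →ₗ[R] R :=
  ∑ i ∈ S, entryLinearMap R R i i

lemma blockTrace_apply [CommSemiring R] (S : Finset ι) (B : Matrix ι ι R) :
    blockTrace S B = ∑ i ∈ S, B i i := by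
  simp [blockTrace]

lemma blockTrace_one [CommSemiring R] [DecidableEq ι] (S : Finset ι) :
    blockTrace S (1 : Matrix ι ι R) = #S := by
  simp [blockTrace_apply]

lemma card_mul_lt_blockTrace [CommSemiring R] [PartialOrder R] [IsStrictOrderedRing R]
    {S : Finset ι} (hS : S.Nonempty) {B : Matrix ι ι R} {r : R} (hB : ∀ i ∈ S, r < B i i) :
    #S * r < blockTrace S B := by
  rw [blockTrace_apply, ← nsmul_eq_mul, ← sum_const]
  exact sum_lt_sum_of_nonempty hS hB

lemma sq_blockTrace_div_card_le [Field R] [LinearOrder R] [IsStrictOrderedRing R] (S : Finset ι)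
    (B : Matrix ι ι R) : blockTrace S B ^ 2 / #S ≤ ∑ i ∈ S, ∑ j ∈ S, B i j ^ 2 :=
  calc blockTrace S B ^ 2 / #S
      ≤ ∑ i ∈ S, B i i ^ 2 := by
        rw [blockTrace_apply]
        exact div_le_of_le_mul₀ (Nat.cast_nonneg _) (sum_nonneg fun _ _ ↦ sq_nonneg _)
          (mul_comm (#S : R) _ ▸ sq_sum_le_card_mul_sum_sq)
    _ ≤ ∑ i ∈ S, ∑ j ∈ S, B i j ^ 2 := sum_le_sum fun i hi ↦
        single_le_sum (f := fun j ↦ B i j ^ 2) (fun _ _ ↦ sq_nonneg _) hi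

variable [Fintype ι] [DecidableEq ι]

/-- The squared Frobenius norm of the block of a matrix with rows in `S` and columns outside `S`. -/
def offBlockSq [Semiring R] (S : Finset ι) (B : Matrix ι ι R) : R :=
  ∑ i ∈ S, ∑ j ∈ Sᶜ, B i j ^ 2

lemma blockTrace_add_blockTrace_compl [CommSemiring R] (S : Finset ι) (B : Matrix ι ι R) :
    blockTrace S B + blockTrace Sᶜ B = B.trace := by
  simp only [blockTrace_apply, sum_add_sum_compl, trace, diag_apply]

lemma offBlockSq_compl [Semiring R] (S : Finset ι) {B : Matrix ι ι R} (hB : B.IsSymm) :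
    offBlockSq Sᶜ B = offBlockSq S B := by
  rw [offBlockSq, offBlockSq, compl_compl, sum_comm]
  simp only [hB.apply]

variable [Field R] [LinearOrder R] [IsStrictOrderedRing R]

lemma offBlockSq_nonneg (S : Finset ι) (B : Matrix ι ι R) : 0 ≤ offBlockSq S B :=
  sum_nonneg fun _ _ ↦ sum_nonneg fun _ _ ↦ sq_nonneg _

lemma sq_blockTrace_div_card_add_offBlockSq_le (S : Finset ι) (B : Matrix ι ι R) :
    blockTrace S B ^ 2 / #S + offBlockSq S B ≤ blockTrace S (B * Bᵀ) := by
  have row_split : blockTrace S (B * Bᵀ) = ∑ i ∈ S, ∑ j ∈ S, B i j ^ 2 + offBlockSq S B := by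
    simp only [blockTrace_apply, offBlockSq, mul_apply, transpose_apply, ← sq,
      ← sum_add_distrib, sum_add_sum_compl]
  rw [row_split]
  gcongr
  exact sq_blockTrace_div_card_le S B

end BlockDecomposition

section Arithmetic

/-- The denominator of the constant in `alphaF`, in terms of the two block sizes `p = k` and
`q = n - k`; this form shows that it is symmetric in them. -/
def alphaDenom (p q : ℝ) : ℝ := p ^ 2 * (q - 1) + q ^ 2 * (p - 1)

lemma alphaDenom_pos {p q : ℝ} (hp : 1 < p) (hq : 1 ≤ q) : 0 < alphaDenom p q :=
  add_pos_of_nonneg_of_pos (mul_nonneg (sq_nonneg p) (sub_nonneg.2 hq))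
    (mul_pos (by positivity) (sub_pos.2 hp))

lemma alphaF_mul_alphaDenom {n k l : ℕ} (hn : n = k + l) (hk : 2 ≤ k) (hl : 1 ≤ l) (H c : ℝ) :
    alphaF n k H c * alphaDenom k l =
      ((k + l - 1) * alphaDenom k l - k * l * (k + l - 2)) * (c + H ^ 2) := by
  have denom_eq : (k : ℝ) * (k + l - 2 * k) + (k + l) * (k - 1) * (k + l - k) =
      alphaDenom k l := by
    rw [alphaDenom]; ring
  have denom_ne_zero : alphaDenom k l ≠ 0 :=
    (alphaDenom_pos (by exact_mod_cast hk) (by exact_mod_cast hl)).ne'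
  rw [alphaF, hn, Nat.cast_add, denom_eq]
  field_simp
  ring

/-- The variables `x`, `y`, `z` stand for `|τ|²`, `|σ|²`, `⟨τ, σ⟩`, and `h` for `H²`. -/
lemma two_mul_sub_lt_of_block_bounds {p q α c h N x y z : ℝ} (hp : 2 ≤ p) (hq : 2 ≤ q)
    (hα : α * alphaDenom p q =
      ((p + q - 1) * alphaDenom p q - p * q * (p + q - 2)) * (c + h))
    (hh : (p + q) ^ 2 * h = x + y + 2 * z) (hN : 0 ≤ N)
    (hxN : p * α + N < p * ((p + q - 1) * c) + (1 - 1 / p) * x + z)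
    (hyN : q * α + N < q * ((p + q - 1) * c) + (1 - 1 / q) * y + z) :
    2 * N - z < p * q * c := by
  have hp0 : p ≠ 0 := by positivity
  have hq0 : q ≠ 0 := by positivity
  have weighted_x := mul_lt_mul_of_pos_left hxN
    (mul_pos (by linarith) (by linarith) : 0 < p * (q - 1))
  have weighted_y := mul_lt_mul_of_pos_left hyN
    (mul_pos (by linarith) (by linarith) : 0 < q * (p - 1))
  have coeff_x : p * (q - 1) * (1 - 1 / p) = (p - 1) * (q - 1) := by field_simp
  have coeff_y : q * (p - 1) * (1 - 1 / q) = (p - 1) * (q - 1) := by field_simp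
  have combined : (2 * p * q - (p + q)) * N - (p + q - 2) * z < (p + q - 2) * (p * q * c) := by
    rw [alphaDenom] at hα
    linear_combination weighted_x + weighted_y + x * coeff_x + y * coeff_y - hα
      - (p - 1) * (q - 1) * hh
  have coeff_N : 2 * (p + q - 2) ≤ 2 * p * q - (p + q) := by
    nlinarith [mul_nonneg (sub_nonneg.2 hp) (sub_nonneg.2 hq)]
  have weighted_N := mul_le_mul_of_nonneg_right coeff_N hN
  exact lt_of_mul_lt_mul_left (by linarith) (by linarith : 0 ≤ p + q - 2)

end Arithmetic

section Ricci

variable {n m : ℕ} (c : ℝ) (A : Fin m → Matrix (Fin n) (Fin n) ℝ)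

lemma natCast_mul_cF (a : Fin m) : (n : ℝ) * cF n m A a = (A a).trace := by
  rcases eq_or_ne n 0 with rfl | hn
  · simp
  · rw [cF]; field_simp

lemma natCast_sq_mul_HF_sq (S : Finset (Fin n)) :
    (n : ℝ) ^ 2 * HF n m A ^ 2 = ∑ a, blockTrace S (A a) ^ 2 + ∑ a, blockTrace Sᶜ (A a) ^ 2
      + 2 * ∑ a, blockTrace S (A a) * blockTrace Sᶜ (A a) := by
  rw [HF, Real.sq_sqrt (sum_nonneg fun _ _ ↦ sq_nonneg _), mul_sum, mul_sum, ← sum_add_distrib,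
    ← sum_add_distrib]
  refine sum_congr rfl fun a _ ↦ ?_
  rw [← mul_pow, natCast_mul_cF, ← blockTrace_add_blockTrace_compl S]
  ring

lemma blockTrace_RicF (S : Finset (Fin n)) :
    blockTrace S (RicF n m c A) = #S * ((n - 1) * c)
      + ∑ a, ((A a).trace * blockTrace S (A a) - blockTrace S (A a * A a)) := by
  simp only [RicF, map_add, map_sum, map_sub, map_smul, blockTrace_one, natCast_mul_cF,
    smul_eq_mul]
  ring

variable {A}

lemma blockTrace_RicF_add_offBlockSq_le (hA : ∀ a, (A a).IsSymm) (S : Finset (Fin n)) :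
    blockTrace S (RicF n m c A) + ∑ a, offBlockSq S (A a) ≤
      #S * ((n - 1) * c) + (1 - 1 / #S) * ∑ a, blockTrace S (A a) ^ 2
        + ∑ a, blockTrace S (A a) * blockTrace Sᶜ (A a) := by
  rw [blockTrace_RicF, mul_sum, add_assoc, add_assoc, ← sum_add_distrib, ← sum_add_distrib]
  gcongr _ + ∑ a, ?_ with a
  have cauchy_schwarz := sq_blockTrace_div_card_add_offBlockSq_le S (A a)
  rw [(hA a).eq] at cauchy_schwarz
  rw [← blockTrace_add_blockTrace_compl S]
  linear_combination cauchy_schwarz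

lemma two_mul_offBlockSq_sub_lt (hA : ∀ a, (A a).IsSymm) {S : Finset (Fin n)}
    (hS : 2 ≤ #S) (hSc : 2 ≤ #Sᶜ)
    (hRicS : #S * alphaF n #S (HF n m A) c < blockTrace S (RicF n m c A))
    (hRicSc : #Sᶜ * alphaF n #S (HF n m A) c < blockTrace Sᶜ (RicF n m c A)) :
    2 * ∑ a, offBlockSq S (A a) - ∑ a, blockTrace S (A a) * blockTrace Sᶜ (A a)
      < #S * #Sᶜ * c := by
  have card_add : n = #S + #Sᶜ := by rw [card_add_card_compl, Fintype.card_fin]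
  have cast_card_add : (n : ℝ) = #S + #Sᶜ := by exact_mod_cast card_add
  have hp : (2 : ℝ) ≤ #S := by exact_mod_cast hS
  have hq : (2 : ℝ) ≤ #Sᶜ := by exact_mod_cast hSc
  have bound_S := blockTrace_RicF_add_offBlockSq_le c hA S
  have bound_Sc := blockTrace_RicF_add_offBlockSq_le c hA Sᶜ
  have mean_sq := natCast_sq_mul_HF_sq A S
  simp only [compl_compl, offBlockSq_compl S (hA _), mul_comm (blockTrace Sᶜ _)] at bound_Sc
  rw [cast_card_add] at bound_S bound_Sc mean_sq
  exact two_mul_sub_lt_of_block_bounds hp hq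
    (alphaF_mul_alphaDenom card_add hS (by omega) _ c) mean_sq
    (sum_nonneg fun a _ ↦ offBlockSq_nonneg S (A a)) (by linarith) (by linarith)

variable (A)

lemma ThetaF_eq {S : Finset (Fin n)} {q : ℕ} (hS : ∀ i, i ∈ S ↔ (i : ℕ) < q) :
    ThetaF n m A q = 2 * ∑ a, offBlockSq S (A a)
      - ∑ a, blockTrace S (A a) * blockTrace Sᶜ (A a) := by
  have filter_lt : univ.filter (fun i : Fin n ↦ (i : ℕ) < q) = S := by ext; simp [hS]
  have filter_ge : univ.filter (fun i : Fin n ↦ q ≤ (i : ℕ)) = Sᶜ := by ext; simp [hS]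
  simp only [ThetaF, filter_lt, filter_ge, offBlockSq, blockTrace_apply,
    sum_sub_distrib, ← mul_sum]
  simp only [sum_mul_sum, sum_comm (s := Sᶜ) (t := (univ : Finset (Fin m))),
    sum_comm (s := S) (t := (univ : Finset (Fin m)))]

end Ricci

lemma lt_diag_of_forall_lt_dotProduct_mulVec {ι R : Type*} [Fintype ι] [Semiring R]
    [Nontrivial R] [LT R] {B : Matrix ι ι R} {r : R}
    (hB : ∀ x : ι → R, x ≠ 0 → r * ∑ i, x i ^ 2 < x ⬝ᵥ B *ᵥ x) (i : ι) : r < B i i := by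
  classical
  simpa [Pi.single_apply] using hB (Pi.single i 1) (by simp)

theorem stmt_12_general (n m : ℕ) (c : ℝ) (A : Fin m → Matrix (Fin n) (Fin n) ℝ)
    (hA : ∀ a, (A a).IsSymm) (k : ℕ) (hk : 2 ≤ k) (hkn : k + 2 ≤ n)
    (hRic : ∀ i, alphaF n k (HF n m A) c < RicF n m c A i i) :
    ThetaF n m A k < k * (n - k) * c := by
  obtain ⟨S, hS⟩ : ∃ S : Finset (Fin n), ∀ i, i ∈ S ↔ (i : ℕ) < k :=
    ⟨univ.filter (·.val < k), by simp⟩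
  have card_S : #S = k := by
    rw [show S = univ.filter (·.val < k) by ext; simp [hS], Fin.card_filter_val_lt]
    omega
  have card_Sc : #Sᶜ = n - k := by rw [card_compl, card_S, Fintype.card_fin]
  subst card_S
  rw [ThetaF_eq A hS, ← Nat.cast_sub (by omega), ← card_Sc]
  exact two_mul_offBlockSq_sub_lt c hA hk (by omega)
    (card_mul_lt_blockTrace (card_pos.1 (by omega)) fun i _ ↦ hRic i)
    (card_mul_lt_blockTrace (card_pos.1 (by omega)) fun i _ ↦ hRic i)

theorem stmt_12 (n m : ℕ) (hn : 5 ≤ n) (hm : 1 ≤ m) (c : ℝ)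
    (A : Fin m → Matrix (Fin n) (Fin n) ℝ) (hA : ∀ a : Fin m, (A a).IsSymm)
    (k : ℕ) (hk : 2 ≤ k) (hk' : k ≤ n / 2)
    (hRic : ∀ x : Fin n → ℝ, x ≠ 0 →
      alphaF n k (HF n m A) c * ∑ i : Fin n, (x i) ^ 2 < x ⬝ᵥ (RicF n m c A).mulVec x) :
    ThetaF n m A k < (k : ℝ) * ((n : ℝ) - (k : ℝ)) * c :=
  stmt_12_general n m c A hA k hk (by omega) (lt_diag_of_forall_lt_dotProduct_mulVec hRic)
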